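/- Let C be an abelian monoidal category with unit 𝟙 whose tensor product is additive in each variable, let (P,d,μ_P) be a projective 2-power flat resolution of 𝟙, and let Δ_P, Δ'_P : P ⟶ P⊗P be two morphisms of resolutions. Let f be a degree m cocycle and g a degree n cocycle (m, n ≥ 1); let ψ_f, ψ_g be homotopy liftings of (f,Δ_P), (g,Δ_P), and let ψ'_f, ψ'_g be homotopy liftings of (f,Δ'_P), (g,Δ'_P). Then the cocycles f∘ψ_g − (−1)^{(m−1)(n−1)} g∘ψ_f and f∘ψ'_g − (−1)^{(m−1)(n−1)} g∘ψ'_f are cohomologous, i.e. their difference is a coboundary. -/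

import Mathlib

/-!
STATEMENT 11: for a projective 2-power flat resolution `P` of `𝟙`, the cohomology class
of the bracket `[f,g] = f ψ_g - (-1)^{(m-1)(n-1)} g ψ_f` does not depend on the choice
of the diagonal map `Δ_P` (the `Δ_P`-independence part of the paper's Theorem 4.11).
-/

open CategoryTheory CategoryTheory.Limits CategoryTheory.MonoidalCategory

universe v u

attribute [local instance] CategoryTheory.Abelian.hasFiniteBiproducts

variable {C : Type u} [Category.{v} C] [Abelian C] [MonoidalCategory C] [MonoidalPreadditive C]

/-- The degree `i` piece of the tensor product complex `E ⊗ F`: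
`(E ⊗ F)_i = ⨁_{j+k=i} E_j ⊗ F_k`. -/
noncomputable abbrev tOb (E F : ℕ → C) (i : ℕ) : C :=
  ⨁ (fun j : Fin (i + 1) => E j.1 ⊗ F (i - j.1))

/-- The differential of the tensor product complex `P ⊗ P`; on the summand
`P_j ⊗ P_k` it is `d ⊗ 1 + (-1)^j (1 ⊗ d)`. -/
noncomputable def tD (P : ℕ → C) (dP : ∀ i, P (i + 1) ⟶ P i) (i : ℕ) :
    tOb P P (i + 1) ⟶ tOb P P i :=
  biproduct.matrix fun (j : Fin (i + 2)) (k : Fin (i + 1)) =>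
    (if h : j.1 = k.1 + 1 then
        eqToHom (show P j.1 ⊗ P (i + 1 - j.1) = P (k.1 + 1) ⊗ P (i - k.1) by
          rw [h, show i + 1 - (k.1 + 1) = i - k.1 by omega]) ≫ (dP k.1 ▷ P (i - k.1))
      else 0) +
    (if h : j.1 = k.1 then
        ((-1 : ℤ) ^ k.1) •
          (eqToHom (show P j.1 ⊗ P (i + 1 - j.1) = P k.1 ⊗ P ((i - k.1) + 1) by
            rw [h, show i + 1 - k.1 = (i - k.1) + 1 by have := k.2; omega]) ≫
            (P k.1 ◁ dP (i - k.1)))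
      else 0)

/-- Contraction of the first tensor factor against a degree `m` morphism `π : E ⟶ 𝟙`
(with single component `π : E_m ⟶ 𝟙`), composed with the left unitor:
this is `(π ⊗ 1_F) : (E ⊗ F)_i ⟶ F_j` for `i = j + m` (no Koszul sign since
`1_F` has degree `0`). -/
noncomputable def cFst (E F : ℕ → C) {m : ℕ} (π : E m ⟶ 𝟙_ C) (i j : ℕ) (h : i = j + m) :
    tOb E F i ⟶ F j :=
  biproduct.π (fun a : Fin (i + 1) => E a.1 ⊗ F (i - a.1)) ⟨m, by omega⟩ ≫
    (π ▷ F (i - m)) ≫ (λ_ (F (i - m))).hom ≫ eqToHom (congrArg F (show i - m = j by omega))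

/-- Contraction of the second tensor factor against a degree `m` morphism `π : F ⟶ 𝟙`
(with single component `π : F_m ⟶ 𝟙`), composed with the right unitor:
this is `(1_E ⊗ π) : (E ⊗ F)_i ⟶ E j` for `i = j + m`, including the Koszul sign
`(-1)^{m·j}` coming from moving `π` past `E_j`. -/
noncomputable def cSnd (E F : ℕ → C) {m : ℕ} (π : F m ⟶ 𝟙_ C) (i j : ℕ) (h : i = j + m) :
    tOb E F i ⟶ E j :=
  ((-1 : ℤ) ^ (m * j)) •
    (biproduct.π (fun a : Fin (i + 1) => E a.1 ⊗ F (i - a.1)) ⟨j, by omega⟩ ≫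
      (E j ◁ (eqToHom (congrArg F (show i - j = m by omega)) ≫ π)) ≫ (ρ_ (E j)).hom)

/-- The augmentation `(μ ⊗ μ) : (P ⊗ P)_0 = P_0 ⊗ P_0 ⟶ 𝟙 ⊗ 𝟙 ≅ 𝟙`. -/
noncomputable def tAug (P : ℕ → C) (μ : P 0 ⟶ 𝟙_ C) : tOb P P 0 ⟶ 𝟙_ C :=
  biproduct.π (fun a : Fin 1 => P a.1 ⊗ P (0 - a.1)) ⟨0, Nat.one_pos⟩ ≫
    (μ ⊗ₘ μ) ≫ (λ_ (𝟙_ C)).hom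

/-- A degree `n` morphism of (ℕ-indexed, bounded below) complexes: a family of
components `E_i ⟶ F_j` for `i = j + n`. -/
abbrev DH (E F : ℕ → C) (n : ℤ) :=
  ∀ i j : ℕ, (i : ℤ) = (j : ℤ) + n → (E i ⟶ F j)

/-- Pointwise subtraction of degree `n` morphisms. -/
instance {E F : ℕ → C} {n : ℤ} : Sub (DH E F n) :=
  ⟨fun f g i j h => f i j h - g i j h⟩

/-- `∂(f) = d_F ∘ f - (-1)^n f ∘ d_E` for a degree `n` morphism `f`. -/
noncomputable def pdel {E F : ℕ → C} (dE : ∀ i, E (i + 1) ⟶ E i) (dF : ∀ i, F (i + 1) ⟶ F i)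
    {n m : ℤ} (hm : m = n + 1) (f : DH E F n) : DH E F m :=
  fun i j h =>
    f i (j + 1) (by push_cast; omega) ≫ dF j -
      (n.negOnePow : ℤ) •
        (match i, h with
          | 0, _ => 0
          | (k + 1), h => dE k ≫ f k j (by push_cast at h; omega))

/-- The degree `n` morphism `(f ⊗ 1_P - 1_P ⊗ f) ∘ Δ : P ⟶ P` associated to a degree `n`
cochain `f : P_n ⟶ 𝟙` and a diagonal `Δ : P ⟶ P ⊗ P`. -/
noncomputable def liftRHS (P : ℕ → C) (Δ : ∀ i, P i ⟶ tOb P P i) (n : ℕ) (f : P n ⟶ 𝟙_ C) :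
    DH P P (n : ℤ) :=
  fun i j h => Δ i ≫ cFst P P f i j (by omega) - Δ i ≫ cSnd P P f i j (by omega)

/-- The degree `0` morphism `(μ ⊗ 1_P - 1_P ⊗ μ) ∘ Δ : P ⟶ P`. -/
noncomputable def counitRHS (P : ℕ → C) (μ : P 0 ⟶ 𝟙_ C) (Δ : ∀ i, P i ⟶ tOb P P i) :
    DH P P (0 : ℤ) :=
  fun i j h => Δ i ≫ cFst P P μ i j (by omega) - Δ i ≫ cSnd P P μ i j (by omega)

/-- Two degree `k` morphisms `u, v : P ⟶ 𝟙` (identified with their single possibly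
nonzero components `P_k ⟶ 𝟙`) are homotopic iff `u - v = ∂(s)` for a degree `k-1`
morphism `s : P ⟶ 𝟙`; unravelled, `u - v = (-1)^k (s ∘ d_{k-1})`. -/
def homotopicToUnit (P : ℕ → C) (dP : ∀ i, P (i + 1) ⟶ P i) (k : ℕ)
    (u v : P k ⟶ 𝟙_ C) : Prop :=
  if hk : k = 0 then u = v
  else ∃ s : P (k - 1) ⟶ 𝟙_ C,
    u - v = ((-1 : ℤ) ^ k) •
      (eqToHom (congrArg P (show k = (k - 1) + 1 by omega)) ≫ dP (k - 1) ≫ s)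

/-- `ψf` is a homotopy lifting of `(f, Δ)`:  `∂(ψ_f) = (f ⊗ 1_P - 1_P ⊗ f)Δ` and
`μ ∘ ψ_f ∼ (-1)^{n+1} f ∘ ψ` for some degree `-1` morphism `ψ : P ⟶ P` with
`∂(ψ) = (μ ⊗ 1_P - 1_P ⊗ μ)Δ`. -/
def IsHomotopyLifting (P : ℕ → C) (dP : ∀ i, P (i + 1) ⟶ P i) (μ : P 0 ⟶ 𝟙_ C)
    (Δ : ∀ i, P i ⟶ tOb P P i) (n : ℕ) (hn : 1 ≤ n) (f : P n ⟶ 𝟙_ C)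
    (ψf : DH P P ((n : ℤ) - 1)) : Prop :=
  pdel dP dP (show (n : ℤ) = ((n : ℤ) - 1) + 1 by ring) ψf = liftRHS P Δ n f ∧
  ∃ ψ : DH P P (-1 : ℤ),
    pdel dP dP (show (0 : ℤ) = (-1 : ℤ) + 1 by ring) ψ = counitRHS P μ Δ ∧
    homotopicToUnit P dP (n - 1)
      (ψf (n - 1) 0 (by omega) ≫ μ)
      (((-1 : ℤ) ^ (n + 1)) • (ψ (n - 1) n (by omega) ≫ f))

/-!
Both diagonals lift the identity of `𝟙` along the resolution `P ⊗ P`, so `Δ - Δ' = ∂(h)` for some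
`h`. Composing `h` with the chain map `f ⊗ 1 - 1 ⊗ f` turns a homotopy lifting `ψ_f` for `Δ` into
the homotopy lifting `ψ_f - (-1)^m (f ⊗ 1 - 1 ⊗ f) h` for `Δ'`. Two liftings of `f` for the same
diagonal differ by a chain map that vanishes over `𝟙` up to homotopy, hence by a boundary, so the
class of the bracket may be computed with these corrected liftings. Finally
`f (g ⊗ 1 - 1 ⊗ g) = -(-1)^{mn} g (f ⊗ 1 - 1 ⊗ f)`, as both sides are built from `f ⊗ g`, and
therefore the two correction terms cancel in the bracket.
-/

section Coboundaries

variable {𝒜 : Type u} [Category.{v} 𝒜] [Preadditive 𝒜] {E : ℕ → 𝒜}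

/-- The coboundaries among the morphisms `E_i ⟶ X`, that is, those which factor through the
differential `E_i ⟶ E_{i-1}`. As `E` is `ℕ`-indexed, only `0` is a coboundary for `i = 0`. -/
def coboundaries (dE : ∀ i, E (i + 1) ⟶ E i) (X : 𝒜) : ∀ i, AddSubgroup (E i ⟶ X)
  | 0 => ⊥
  | i + 1 => (Preadditive.leftComp X (dE i)).range

variable {dE : ∀ i, E (i + 1) ⟶ E i} {X : 𝒜}

lemma mem_coboundaries_zero {u : E 0 ⟶ X} : u ∈ coboundaries dE X 0 ↔ u = 0 :=
  AddSubgroup.mem_bot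

lemma mem_coboundaries_succ {i : ℕ} {u : E (i + 1) ⟶ X} :
    u ∈ coboundaries dE X (i + 1) ↔ ∃ v : E i ⟶ X, dE i ≫ v = u :=
  Iff.rfl

lemma exists_eq_comp_of_mem_coboundaries {i k : ℕ} {u : E i ⟶ X} (hu : u ∈ coboundaries dE X i)
    (h : i = k + 1) : ∃ v : E k ⟶ X, u = eqToHom (congrArg E h) ≫ dE k ≫ v := by
  subst h
  obtain ⟨v, rfl⟩ := mem_coboundaries_succ.mp hu
  exact ⟨v, by simp only [eqToHom_refl, Category.id_comp]⟩

end Coboundaries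

section Resolutions

variable {𝒜 : Type u} [Category.{v} 𝒜] [Abelian 𝒜]

lemma comp_eq_zero_of_imageSubobject_eq {X Y Z : 𝒜} {a : X ⟶ Y} {b : Y ⟶ Z}
    (h : imageSubobject a = kernelSubobject b) : a ≫ b = 0 := by
  rw [← kernelSubobject_factors_iff, ← h]
  exact (Subobject.factors_iff _ _).mpr ⟨_, imageSubobject_arrow_comp a⟩

lemma exists_lift_of_imageSubobject_eq {Q X Y Z : 𝒜} [Projective Q] {a : X ⟶ Y} {b : Y ⟶ Z}
    (h : imageSubobject a = kernelSubobject b) {x : Q ⟶ Y} (hx : x ≫ b = 0) :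
    ∃ y : Q ⟶ X, y ≫ a = x := by
  let S := ShortComplex.mk a b (comp_eq_zero_of_imageSubobject_eq h)
  have hS : S.Exact := S.exact_iff_image_eq_kernel.mpr h
  exact ⟨hS.liftFromProjective x hx, hS.liftFromProjective_comp x hx⟩

/-- `(F, dF, ε)` is a resolution of `A`: the sequence `⋯ ⟶ F₁ ⟶ F₀ ⟶ A ⟶ 0` is exact. -/
structure IsResolution {F : ℕ → 𝒜} (dF : ∀ i, F (i + 1) ⟶ F i) {A : 𝒜} (ε : F 0 ⟶ A) : Prop where
  epi : Epi ε
  exact_zero : imageSubobject (dF 0) = kernelSubobject ε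
  exact_succ (i : ℕ) : imageSubobject (dF (i + 1)) = kernelSubobject (dF i)

variable {E F G : ℕ → 𝒜} {dE : ∀ i, E (i + 1) ⟶ E i} {dF : ∀ i, F (i + 1) ⟶ F i}
  {dG : ∀ i, G (i + 1) ⟶ G i} {A X : 𝒜} {ε : F 0 ⟶ A} {n q : ℤ}

lemma IsResolution.d_comp_d (hF : IsResolution dF ε) (i : ℕ) : dF (i + 1) ≫ dF i = 0 :=
  comp_eq_zero_of_imageSubobject_eq (hF.exact_succ i)

namespace DH

lemma sub_apply (φ ψ : DH E F n) (i j : ℕ) (h : (i : ℤ) = j + n) :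
    (φ - ψ) i j h = φ i j h - ψ i j h :=
  rfl

end DH

lemma pdel_zero (hn : n = q + 1) (s : DH E F q) (j : ℕ) (h : ((0 : ℕ) : ℤ) = j + n) :
    pdel dE dF hn s 0 j h = s 0 (j + 1) (by push_cast at h ⊢; lia) ≫ dF j := by
  simp only [pdel, smul_zero, sub_zero]

lemma pdel_succ (hn : n = q + 1) (s : DH E F q) (k j : ℕ) (h : ((k + 1 : ℕ) : ℤ) = j + n) :
    pdel dE dF hn s (k + 1) j h = s (k + 1) (j + 1) (by push_cast at h ⊢; lia) ≫ dF j -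
      (q.negOnePow : ℤ) • (dE k ≫ s k j (by push_cast at h; lia)) :=
  rfl

lemma pdel_sub (hn : n = q + 1) (s t : DH E F q) :
    pdel dE dF hn (s - t) = pdel dE dF hn s - pdel dE dF hn t := by
  funext i j h
  cases i with
  | zero => simp only [DH.sub_apply, pdel_zero, Preadditive.sub_comp]
  | succ k =>
    simp only [DH.sub_apply, pdel_succ, Preadditive.sub_comp, Preadditive.comp_sub, smul_sub]
    abel

lemma pdel_comp_mem_coboundaries (hn : n = q + 1) (s : DH E F q) {i j : ℕ}
    (h : (i : ℤ) = j + n) {f : F j ⟶ X} (hf : dF j ≫ f = 0) :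
    pdel dE dF hn s i j h ≫ f ∈ coboundaries dE X i := by
  cases i with
  | zero => rw [mem_coboundaries_zero, pdel_zero, Category.assoc, hf, comp_zero]
  | succ k =>
    refine mem_coboundaries_succ.mpr ⟨-(q.negOnePow : ℤ) • (s k j (by lia) ≫ f), ?_⟩
    simp only [pdel_succ, Preadditive.sub_comp, Preadditive.zsmul_comp, Preadditive.comp_zsmul,
      Preadditive.comp_neg, Category.assoc, hf, comp_zero, zero_sub, neg_smul]

namespace DH

/-- `φ` is a chain map of degree `n`, that is, `∂(φ) = 0`. -/
def IsChainMap (dE : ∀ i, E (i + 1) ⟶ E i) (dF : ∀ i, F (i + 1) ⟶ F i) (φ : DH E F n) : Prop :=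
  ∀ i j h, pdel dE dF rfl φ i j h = 0

lemma isChainMap_sub_of_pdel_eq (hn : n = q + 1) {s t : DH E F q}
    (h : pdel dE dF hn s = pdel dE dF hn t) : IsChainMap dE dF (s - t) := by
  subst hn
  intro i j hij
  rw [pdel_sub, h, sub_apply, sub_self]

lemma IsChainMap.comp_d_zero {φ : DH E F n} (hφ : IsChainMap dE dF φ) (j : ℕ)
    (h : ((0 : ℕ) : ℤ) = (j + 1 : ℕ) + n) : φ 0 (j + 1) h ≫ dF j = 0 := by
  rw [← hφ 0 j (by push_cast at h ⊢; lia), pdel_zero]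

lemma IsChainMap.comp_d_succ {φ : DH E F n} (hφ : IsChainMap dE dF φ) (k j : ℕ)
    (h : ((k + 1 : ℕ) : ℤ) = (j + 1 : ℕ) + n) :
    φ (k + 1) (j + 1) h ≫ dF j =
      (n.negOnePow : ℤ) • (dE k ≫ φ k j (by push_cast at h; lia)) := by
  rw [← sub_eq_zero, ← hφ (k + 1) j (by push_cast at h ⊢; lia), pdel_succ]

/-- The components `E_i ⟶ F_j` of `φ + (-1)^q a ∘ d`, where `a` is the component with target `F_j`
of a degree `q` morphism `s`. The equation `∂(s) = φ` says that they are the composites of the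
next component of `s` with the differential of `F`. -/
def nextBoundary (dE : ∀ i, E (i + 1) ⟶ E i) (hn : n = q + 1) (φ : DH E F n) {j : ℕ}
    (a : ∀ k : ℕ, (k : ℤ) = j + q → (E k ⟶ F j)) : ∀ i : ℕ, (i : ℤ) = j + n → (E i ⟶ F j)
  | 0, h => φ 0 j h
  | k + 1, h => φ (k + 1) j h + (q.negOnePow : ℤ) • (dE k ≫ a k (by push_cast at h; lia))

lemma pdel_eq_of_comp_d_eq_nextBoundary (hn : n = q + 1) {φ : DH E F n} {s : DH E F q}
    (hs : ∀ j i h, s i (j + 1) (by push_cast; lia) ≫ dF j =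
      nextBoundary dE hn φ (fun k => s k j) i h) :
    pdel dE dF hn s = φ := by
  funext i j h
  cases i with
  | zero => rw [pdel_zero, hs j 0 h, nextBoundary]
  | succ k => rw [pdel_succ, hs j (k + 1) h, nextBoundary, add_sub_cancel_right]

lemma nextBoundary_comp_d (hdE : ∀ i, dE (i + 1) ≫ dE i = 0) (hn : n = q + 1) {φ : DH E F n}
    (hφ : IsChainMap dE dF φ) {j : ℕ} {a : ∀ k : ℕ, (k : ℤ) = j + q → (E k ⟶ F j)}
    {b : ∀ k : ℕ, (k : ℤ) = (j + 1 : ℕ) + q → (E k ⟶ F (j + 1))}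
    (hab : ∀ i h, b i (by push_cast; lia) ≫ dF j = nextBoundary dE hn φ a i h)
    (i : ℕ) (h : (i : ℤ) = (j + 1 : ℕ) + n) :
    nextBoundary dE hn φ b i h ≫ dF j = 0 := by
  have hsign : (n.negOnePow : ℤ) = -(q.negOnePow : ℤ) := by
    rw [hn, Int.negOnePow_succ, Units.val_neg]
  rcases i with _ | _ | i
  · exact hφ.comp_d_zero j h
  all_goals
    rw [nextBoundary, Preadditive.add_comp, hφ.comp_d_succ, Preadditive.zsmul_comp, Category.assoc,
      hab _ (by push_cast at h ⊢; lia), nextBoundary, hsign, neg_smul]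
  · exact neg_add_cancel _
  · rw [Preadditive.comp_add, Preadditive.comp_zsmul, reassoc_of% hdE i, zero_comp, smul_zero,
      add_zero, neg_add_cancel]

lemma exists_nextBoundary_comp_eq_zero [∀ i, Projective (E i)] [Epi ε] (hn : n = q + 1)
    {φ : DH E F n} (hε : ∀ i h, φ i 0 h ≫ ε ∈ coboundaries dE A i) :
    ∃ a : ∀ k : ℕ, (k : ℤ) = (0 : ℕ) + q → (E k ⟶ F 0),
      ∀ i h, nextBoundary dE hn φ a i h ≫ ε = 0 := by
  have hlift (k : ℕ) (hk : (k : ℤ) = (0 : ℕ) + q) : ∃ b : E k ⟶ F 0,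
      (q.negOnePow : ℤ) • (dE k ≫ b) ≫ ε = -(φ (k + 1) 0 (by push_cast; lia) ≫ ε) := by
    obtain ⟨v, hv⟩ := mem_coboundaries_succ.mp (hε (k + 1) (by push_cast; lia))
    refine ⟨-(q.negOnePow : ℤ) • Projective.factorThru v ε, ?_⟩
    simp only [Preadditive.comp_zsmul, Preadditive.comp_neg, Preadditive.zsmul_comp,
      Preadditive.neg_comp, Category.assoc, Projective.factorThru_comp, hv, smul_neg, smul_smul,
      Int.units_coe_mul_self, neg_smul, one_smul]
  choose a ha using hlift
  refine ⟨a, fun i h => ?_⟩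
  cases i with
  | zero => exact mem_coboundaries_zero.mp (hε 0 h)
  | succ k =>
    rw [nextBoundary, Preadditive.add_comp, Preadditive.zsmul_comp,
      ha k (by push_cast at h ⊢; lia), add_neg_cancel]

end DH

lemma exists_dependent_sequence {S : ℕ → Type*} (good : ∀ j, S j → Prop)
    (r : ∀ j, S j → S (j + 1) → Prop) (h0 : ∃ a, good 0 a)
    (hsucc : ∀ j a, good j a → ∃ b, good (j + 1) b ∧ r j a b) :
    ∃ s : ∀ j, S j, ∀ j, r j (s j) (s (j + 1)) := by
  choose next hgood hr using hsucc
  let t : ∀ j, {a : S j // good j a} := fun j =>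
    Nat.rec ⟨h0.choose, h0.choose_spec⟩ (fun j a => ⟨next j a.1 a.2, hgood j a.1 a.2⟩) j
  exact ⟨fun j => (t j).1, fun j => hr j (t j).1 (t j).2⟩

lemma exists_pdel_eq [∀ i, Projective (E i)] (hdE : ∀ i, dE (i + 1) ≫ dE i = 0)
    (hF : IsResolution dF ε) (hn : n = q + 1) {φ : DH E F n} (hφ : φ.IsChainMap dE dF)
    (hε : ∀ i h, φ i 0 h ≫ ε ∈ coboundaries dE A i) :
    ∃ s : DH E F q, pdel dE dF hn s = φ := by
  have := hF.epi
  obtain ⟨s, hs⟩ := exists_dependent_sequence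
    (S := fun j => ∀ k : ℕ, (k : ℤ) = j + q → (E k ⟶ F j))
    (fun j a => ∀ i h, ∃ b : E i ⟶ F (j + 1), b ≫ dF j = DH.nextBoundary dE hn φ a i h)
    (fun j a b => ∀ i h, b i (by push_cast; lia) ≫ dF j = DH.nextBoundary dE hn φ a i h)
    (by
      obtain ⟨a, ha⟩ := DH.exists_nextBoundary_comp_eq_zero hn hε
      exact ⟨a, fun i h => exists_lift_of_imageSubobject_eq hF.exact_zero (ha i h)⟩)
    (fun j a ha => by
      choose b hb using ha
      refine ⟨fun k hk => b k (by push_cast at hk; lia), fun i h => ?_, hb⟩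
      exact exists_lift_of_imageSubobject_eq (hF.exact_succ j)
        (DH.nextBoundary_comp_d hdE hn hφ hb i h))
  exact ⟨fun i j h => s j i h, DH.pdel_eq_of_comp_d_eq_nextBoundary hn hs⟩

/-- `h` is a homotopy from `v` to `u`, that is, `∂(h) = u - v`; morphisms of degree `0` are
given by their components `E_i ⟶ F_i`. -/
def IsHomotopy (dE : ∀ i, E (i + 1) ⟶ E i) (dF : ∀ i, F (i + 1) ⟶ F i) (u v : ∀ i, E i ⟶ F i)
    (h : DH E F (-1)) : Prop :=
  ∀ i, pdel dE dF (neg_add_cancel 1).symm h i i (by simp) = u i - v i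

theorem exists_isHomotopy [∀ i, Projective (E i)] (hdE : ∀ i, dE (i + 1) ≫ dE i = 0)
    (hF : IsResolution dF ε) {u v : ∀ i, E i ⟶ F i}
    (hu : ∀ i, u (i + 1) ≫ dF i = dE i ≫ u i) (hv : ∀ i, v (i + 1) ≫ dF i = dE i ≫ v i)
    (huv : u 0 ≫ ε = v 0 ≫ ε) : ∃ h, IsHomotopy dE dF u v h := by
  let φ : DH E F 0 := fun i j hij => (u i - v i) ≫ eqToHom (congrArg F (by lia))
  have hφ : φ.IsChainMap dE dF := by
    intro i j hij
    obtain rfl : i = j + 1 := by lia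
    simp [φ, pdel_succ, hu, hv]
  obtain ⟨h, hh⟩ := exists_pdel_eq hdE hF (neg_add_cancel 1).symm hφ fun i hi => by
    obtain rfl : i = 0 := by lia
    simp [φ, huv]
  exact ⟨h, fun i => by simp [hh, φ]⟩

namespace DH

/-- The signed composite `(-1)^n c ∘ h` of a homotopy `h` with a degree `n` morphism `c`. The sign
makes its boundary `c ∘ ∂(h)` when `c` is a chain map. -/
def homotopyComp (h : DH E F (-1)) (c : DH F G n) (hn : n = q + 1) : DH E G q :=
  fun i k hik => (n.negOnePow : ℤ) •
    (h i (i + 1) (by push_cast; lia) ≫ c (i + 1) k (by push_cast; lia))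

lemma pdel_homotopyComp {u v : ∀ i, E i ⟶ F i} {h : DH E F (-1)} (hh : IsHomotopy dE dF u v h)
    {c : DH F G n} (hc : c.IsChainMap dF dG) (hn : n = q + 1) (i j : ℕ) (hij : (i : ℤ) = j + n) :
    pdel dE dG hn (h.homotopyComp c hn) i j hij = (u i - v i) ≫ c i j hij := by
  have hsign : (q.negOnePow : ℤ) = -(n.negOnePow : ℤ) := by
    rw [hn, Int.negOnePow_succ, Units.val_neg, neg_neg]
  rw [← hh i]
  cases i <;>
    simp only [pdel_zero, pdel_succ, homotopyComp, Preadditive.zsmul_comp, Preadditive.comp_zsmul,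
      Preadditive.sub_comp, Preadditive.neg_comp, Category.assoc, hc.comp_d_succ, smul_smul, hsign,
      neg_mul, Int.units_coe_mul_self, one_smul, Int.negOnePow_neg, Int.negOnePow_one,
      Units.val_neg, Units.val_one, neg_smul]

end DH

end Resolutions

section Contractions

section Whiskering

variable {𝒞 : Type u} [Category.{v} 𝒞] [MonoidalCategory 𝒞] {P : ℕ → 𝒞}
  {dP : ∀ i, P (i + 1) ⟶ P i}

lemma whiskerLeft_d_comp_contract_left {A : 𝒞} (f : A ⟶ 𝟙_ 𝒞) {r s j : ℕ} (hr : r = j)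
    (hs : s = r + 1) :
    eqToHom (show A ⊗ P s = A ⊗ P (r + 1) by rw [hs]) ≫ (A ◁ dP r) ≫
        (f ▷ P r) ≫ (λ_ (P r)).hom ≫ eqToHom (congrArg P hr) =
      (f ▷ P s) ≫ (λ_ (P s)).hom ≫
        eqToHom (congrArg P (show s = j + 1 by lia)) ≫ dP j := by
  subst hr hs
  simp only [eqToHom_refl, Category.id_comp, Category.comp_id]
  rw [whisker_exchange_assoc, leftUnitor_naturality]

lemma whiskerRight_d_comp_contract_right {m r s j : ℕ} (f : P m ⟶ 𝟙_ 𝒞) (hr : r = m) (hs : s = r) :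
    eqToHom (show P (j + 1) ⊗ P s = P (j + 1) ⊗ P r by rw [hs]) ≫ (dP j ▷ P r) ≫
        (P j ◁ (eqToHom (congrArg P hr) ≫ f)) ≫ (ρ_ (P j)).hom =
      (P (j + 1) ◁ (eqToHom (congrArg P (hs.trans hr)) ≫ f)) ≫ (ρ_ (P (j + 1))).hom ≫ dP j := by
  subst hs hr
  simp only [eqToHom_refl, Category.id_comp]
  rw [← whisker_exchange_assoc, rightUnitor_naturality]

end Whiskering

variable {P : ℕ → C} {dP : ∀ i, P (i + 1) ⟶ P i}

lemma tD_comp_cFst {m : ℕ} {f : P m ⟶ 𝟙_ C} (hf : dP m ≫ f = 0) {i j : ℕ} (h : i = j + m) :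
    tD P dP i ≫ cFst P P f i j h =
      ((-1 : ℤ) ^ m) • (cFst P P f (i + 1) (j + 1) (by lia) ≫ dP j) := by
  apply biproduct.hom_ext'
  rintro ⟨a, ha⟩
  simp only [tD, cFst, biproduct.ι_matrix_assoc, biproduct.lift_π_assoc, Category.assoc,
    Preadditive.comp_zsmul, biproduct.ι_π_assoc, Preadditive.add_comp]
  rcases eq_or_ne a m with rfl | ham
  · simp only [dite_true, Nat.left_eq_add, one_ne_zero, dite_false, zero_comp, zero_add,
      Preadditive.zsmul_comp, Category.assoc, eqToHom_refl, Category.id_comp]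
    rw [whiskerLeft_d_comp_contract_left f (by lia) (by lia)]
  rcases eq_or_ne a (m + 1) with rfl | ham'
  · have hcocycle : (dP m ▷ P (i - m)) ≫ (f ▷ P (i - m)) = 0 := by
      rw [← comp_whiskerRight, hf, MonoidalPreadditive.zero_whiskerRight]
    simp [reassoc_of% hcocycle]
  · simp [ham, ham']

lemma tD_comp_cSnd {m : ℕ} {f : P m ⟶ 𝟙_ C} (hf : dP m ≫ f = 0) {i j : ℕ} (h : i = j + m) :
    tD P dP i ≫ cSnd P P f i j h =
      ((-1 : ℤ) ^ m) • (cSnd P P f (i + 1) (j + 1) (by lia) ≫ dP j) := by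
  apply biproduct.hom_ext'
  rintro ⟨a, ha⟩
  simp only [tD, cSnd, biproduct.ι_matrix_assoc, biproduct.lift_π_assoc, Category.assoc,
    Preadditive.comp_zsmul, Preadditive.zsmul_comp, biproduct.ι_π_assoc, Preadditive.add_comp]
  rcases eq_or_ne a (j + 1) with rfl | haj
  · have hsign : (-1 : ℤ) ^ m * (-1) ^ (m * (j + 1)) = (-1) ^ (m * j) := by
      rw [mul_add_one, pow_add, mul_left_comm, pow_mul_pow_eq_one m (by norm_num), mul_one]
    simp only [dite_true, Nat.add_eq_left, one_ne_zero, dite_false, zero_comp, add_zero,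
      Category.assoc, eqToHom_refl, Category.id_comp]
    rw [whiskerRight_d_comp_contract_right f (by lia) (by lia), smul_smul, hsign]
  rcases eq_or_ne a j with rfl | haj'
  · have hcocycle : (P a ◁ dP (i - a)) ≫
        (P a ◁ (eqToHom (congrArg P (show i - a = m by lia)) ≫ f)) = 0 := by
      obtain rfl : m = i - a := by lia
      rw [eqToHom_refl, Category.id_comp, ← whiskerLeft_comp, hf,
        MonoidalPreadditive.whiskerLeft_zero]
    simp only [dite_true, dite_false, zero_comp, zero_add, Category.assoc, Preadditive.zsmul_comp,
      reassoc_of% hcocycle, comp_zero, smul_zero, haj, Fin.mk.injEq]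
  · simp [haj, haj']

omit [MonoidalPreadditive C] in
lemma cSnd_comp_eq_cFst_comp {E F : ℕ → C} {m n : ℕ} (f : E m ⟶ 𝟙_ C) (g : F n ⟶ 𝟙_ C) {i : ℕ}
    (h : i = m + n) :
    cSnd E F g i m h ≫ f = ((-1 : ℤ) ^ (m * n)) • (cFst E F f i n (by lia) ≫ g) := by
  obtain rfl : n = i - m := by lia
  simp only [cSnd, cFst, Preadditive.zsmul_comp, Category.assoc, eqToHom_refl, Category.id_comp,
    whiskerLeft_id, ← rightUnitor_naturality, ← leftUnitor_naturality, whisker_exchange_assoc,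
    unitors_equal, mul_comm m]

/-- The degree `m` morphism `f ⊗ 1 - 1 ⊗ f : P ⊗ P ⟶ P` of a degree `m` cochain `f`. -/
noncomputable def contractionDiff {m : ℕ} (f : P m ⟶ 𝟙_ C) : DH (tOb P P) P m :=
  fun i j h => cFst P P f i j (by lia) - cSnd P P f i j (by lia)

lemma isChainMap_contractionDiff {m : ℕ} {f : P m ⟶ 𝟙_ C} (hf : dP m ≫ f = 0) :
    (contractionDiff f).IsChainMap (tD P dP) dP := by
  intro i j h
  obtain ⟨i, rfl⟩ : ∃ k, i = k + 1 := ⟨i - 1, by lia⟩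
  simp only [pdel_succ, contractionDiff, Preadditive.sub_comp, Preadditive.comp_sub,
    tD_comp_cFst hf, tD_comp_cSnd hf, Int.coe_negOnePow_natCast, smul_sub, smul_smul, ← mul_pow,
    neg_mul_neg, one_mul, one_pow, one_smul, sub_self]

omit [MonoidalPreadditive C] in
lemma contractionDiff_comp_comm {m n : ℕ} (f : P m ⟶ 𝟙_ C) (g : P n ⟶ 𝟙_ C) (i : ℕ)
    (h : (i : ℤ) = m + n) :
    contractionDiff g i m h ≫ f =
      -(-1 : ℤ) ^ (m * n) • (contractionDiff f i n (by lia) ≫ g) := by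
  simp only [contractionDiff, Preadditive.sub_comp, cSnd_comp_eq_cFst_comp, smul_sub, smul_smul,
    neg_mul, mul_comm n m, ← mul_pow, one_mul, neg_neg, one_pow, neg_smul, one_smul]
  abel

end Contractions

section HomotopyLiftings

variable {P : ℕ → C} {dP : ∀ i, P (i + 1) ⟶ P i} {μ : P 0 ⟶ 𝟙_ C}

omit [MonoidalPreadditive C] in
lemma homotopicToUnit_iff_sub_mem_coboundaries {k : ℕ} {u v : P k ⟶ 𝟙_ C} :
    homotopicToUnit P dP k u v ↔ u - v ∈ coboundaries dP (𝟙_ C) k := by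
  cases k with
  | zero => simp [homotopicToUnit, mem_coboundaries_zero, sub_eq_zero]
  | succ k =>
    rw [homotopicToUnit, dif_neg k.succ_ne_zero, mem_coboundaries_succ]
    constructor
    · rintro ⟨s, hs⟩
      exact ⟨(-1 : ℤ) ^ (k + 1) • s, by simpa using hs.symm⟩
    · rintro ⟨s, hs⟩
      exact ⟨(-1 : ℤ) ^ (k + 1) • s, by simp [← hs, smul_smul, ← mul_pow]⟩

omit [MonoidalPreadditive C] in
theorem IsHomotopyLifting.comp_sub_comp_mem_coboundaries [∀ i, Projective (P i)]
    (hP : IsResolution dP μ) {Δ : ∀ i, P i ⟶ tOb P P i} {m : ℕ} {hm : 1 ≤ m} {f : P m ⟶ 𝟙_ C}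
    (hf : dP m ≫ f = 0) {ψ ψ' : DH P P ((m : ℤ) - 1)} (hψ : IsHomotopyLifting P dP μ Δ m hm f ψ)
    (hψ' : IsHomotopyLifting P dP μ Δ m hm f ψ') {n : ℕ} {g : P n ⟶ 𝟙_ C} (hg : dP n ≫ g = 0)
    (i : ℕ) (hi : (i : ℤ) = n + (m - 1)) :
    ψ i n hi ≫ g - ψ' i n hi ≫ g ∈ coboundaries dP (𝟙_ C) i := by
  obtain ⟨hd, η, hη, hψη⟩ := hψ
  obtain ⟨hd', η', hη', hψη'⟩ := hψ'
  rw [homotopicToUnit_iff_sub_mem_coboundaries] at hψη hψη'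
  obtain ⟨σ, hσ⟩ := exists_pdel_eq hP.d_comp_d hP (show (-1 : ℤ) = -2 + 1 by norm_num)
    (DH.isChainMap_sub_of_pdel_eq _ (hη.trans hη'.symm)) (fun i hi => by lia)
  have hηf : (η - η') (m - 1) m (by lia) ≫ f ∈ coboundaries dP (𝟙_ C) (m - 1) :=
    hσ ▸ pdel_comp_mem_coboundaries _ σ _ hf
  obtain ⟨τ, hτ⟩ := exists_pdel_eq hP.d_comp_d hP (show (m : ℤ) - 1 = (m - 2) + 1 by ring)
    (DH.isChainMap_sub_of_pdel_eq _ (hd.trans hd'.symm)) (fun i hi => by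
      obtain rfl : i = m - 1 := by lia
      convert add_mem (sub_mem hψη hψη') (zsmul_mem hηf ((-1 : ℤ) ^ (m + 1))) using 1
      simp only [DH.sub_apply, Preadditive.sub_comp, smul_sub]
      abel)
  rw [← Preadditive.sub_comp, ← DH.sub_apply, ← hτ]
  exact pdel_comp_mem_coboundaries _ τ hi hg

/-- The homotopy lifting `ψ - (-1)^m (f ⊗ 1 - 1 ⊗ f) h` of `(f, Δ')` obtained from a homotopy
lifting `ψ` of `(f, Δ)` and a homotopy `h` with `∂(h) = Δ - Δ'`. -/
noncomputable def transportLifting {m : ℕ} (f : P m ⟶ 𝟙_ C) (h : DH P (tOb P P) (-1)) {q : ℤ}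
    (hq : (m : ℤ) = q + 1) (ψ : DH P P q) : DH P P q :=
  ψ - h.homotopyComp (contractionDiff f) hq

lemma pdel_transportLifting {Δ Δ' : ∀ i, P i ⟶ tOb P P i} {h : DH P (tOb P P) (-1)}
    (hh : IsHomotopy dP (tD P dP) Δ Δ' h) {m : ℕ} {f : P m ⟶ 𝟙_ C} (hf : dP m ≫ f = 0) {q : ℤ}
    (hq : (m : ℤ) = q + 1) {ψ : DH P P q} (hψ : pdel dP dP hq ψ = liftRHS P Δ m f) :
    pdel dP dP hq (transportLifting f h hq ψ) = liftRHS P Δ' m f := by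
  funext i j hij
  rw [transportLifting, pdel_sub, hψ, DH.sub_apply,
    DH.pdel_homotopyComp hh (isChainMap_contractionDiff hf)]
  simp only [liftRHS, contractionDiff, Preadditive.sub_comp, Preadditive.comp_sub]
  abel

omit [MonoidalPreadditive C] in
lemma homotopyComp_contractionDiff_comp_comm {m n : ℕ} (f : P m ⟶ 𝟙_ C) (g : P n ⟶ 𝟙_ C)
    (h : DH P (tOb P P) (-1)) {p q : ℤ} (hp : (m : ℤ) = p + 1) (hq : (n : ℤ) = q + 1) (i : ℕ)
    (hi : (i : ℤ) = m + q) :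
    h.homotopyComp (contractionDiff g) hq i m hi ≫ f =
      (-1 : ℤ) ^ ((m + 1) * (n + 1)) •
        (h.homotopyComp (contractionDiff f) hp i n (by lia) ≫ g) := by
  have hsign : (-1 : ℤ) ^ n * -(-1) ^ (m * n) = (-1) ^ ((m + 1) * (n + 1)) * (-1) ^ m := by
    rw [show (m + 1) * (n + 1) = m * n + m + n + 1 by ring]
    rcases neg_one_pow_eq_or ℤ m with hm | hm <;> simp [pow_add, hm, mul_comm]
  simp only [DH.homotopyComp, Int.coe_negOnePow_natCast, Preadditive.zsmul_comp, Category.assoc,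
    contractionDiff_comp_comm f g, Preadditive.comp_zsmul, smul_smul, hsign]

theorem IsHomotopyLifting.transport {Δ Δ' : ∀ i, P i ⟶ tOb P P i} {h : DH P (tOb P P) (-1)}
    (hh : IsHomotopy dP (tD P dP) Δ Δ' h) (hμ : dP 0 ≫ μ = 0) {m : ℕ} {hm : 1 ≤ m}
    {f : P m ⟶ 𝟙_ C} (hf : dP m ≫ f = 0) {ψ : DH P P ((m : ℤ) - 1)}
    (hψ : IsHomotopyLifting P dP μ Δ m hm f ψ) :
    IsHomotopyLifting P dP μ Δ' m hm f (transportLifting f h (sub_add_cancel _ 1).symm ψ) := by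
  obtain ⟨hd, η, hη, hψη⟩ := hψ
  refine ⟨pdel_transportLifting hh hf _ hd, transportLifting μ h (by simp) η,
    pdel_transportLifting hh hμ _ hη, ?_⟩
  rw [homotopicToUnit_iff_sub_mem_coboundaries] at hψη ⊢
  convert hψη using 1
  have hcomm := homotopyComp_contractionDiff_comp_comm f μ h (sub_add_cancel _ 1).symm
    (q := -1) (by simp) (m - 1) (by lia)
  simp only [transportLifting, DH.sub_apply, Preadditive.sub_comp, smul_sub]
  rw [hcomm]
  simp [smul_smul, ← mul_pow]

/-- The cochain `f ∘ ψ_g - (-1)^{(m-1)(n-1)} g ∘ ψ_f` in degree `i = m + n - 1`, which represents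
the bracket of `f` and `g`. -/
def bracketCochain {m n : ℕ} (f : P m ⟶ 𝟙_ C) (g : P n ⟶ 𝟙_ C) (ψf : DH P P ((m : ℤ) - 1))
    (ψg : DH P P ((n : ℤ) - 1)) (i : ℕ) (hi : i + 1 = m + n) : P i ⟶ 𝟙_ C :=
  ψg i m (by lia) ≫ f - (-1 : ℤ) ^ ((m - 1) * (n - 1)) • (ψf i n (by lia) ≫ g)

omit [MonoidalPreadditive C] in
theorem bracketCochain_sub_mem_coboundaries [∀ i, Projective (P i)] (hP : IsResolution dP μ)
    {Δ : ∀ i, P i ⟶ tOb P P i} {m n : ℕ} {hm : 1 ≤ m} {hn : 1 ≤ n}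
    {f : P m ⟶ 𝟙_ C} (hf : dP m ≫ f = 0) {g : P n ⟶ 𝟙_ C} (hg : dP n ≫ g = 0)
    {ψf ψ'f : DH P P ((m : ℤ) - 1)} {ψg ψ'g : DH P P ((n : ℤ) - 1)}
    (hψf : IsHomotopyLifting P dP μ Δ m hm f ψf) (hψg : IsHomotopyLifting P dP μ Δ n hn g ψg)
    (hψ'f : IsHomotopyLifting P dP μ Δ m hm f ψ'f) (hψ'g : IsHomotopyLifting P dP μ Δ n hn g ψ'g)
    (i : ℕ) (hi : i + 1 = m + n) :
    bracketCochain f g ψf ψg i hi - bracketCochain f g ψ'f ψ'g i hi ∈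
      coboundaries dP (𝟙_ C) i := by
  have hF := hψf.comp_sub_comp_mem_coboundaries hP hf hψ'f hg i (by lia)
  have hG := hψg.comp_sub_comp_mem_coboundaries hP hg hψ'g hf i (by lia)
  convert sub_mem hG (zsmul_mem hF ((-1 : ℤ) ^ ((m - 1) * (n - 1)))) using 1
  simp only [bracketCochain, smul_sub]
  abel

omit [MonoidalPreadditive C] in
theorem bracketCochain_transportLifting {m n : ℕ} (hm : 1 ≤ m) (hn : 1 ≤ n) (f : P m ⟶ 𝟙_ C)
    (g : P n ⟶ 𝟙_ C) (h : DH P (tOb P P) (-1)) (ψf : DH P P ((m : ℤ) - 1))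
    (ψg : DH P P ((n : ℤ) - 1)) (i : ℕ) (hi : i + 1 = m + n) :
    bracketCochain f g (transportLifting f h (sub_add_cancel _ 1).symm ψf)
      (transportLifting g h (sub_add_cancel _ 1).symm ψg) i hi = bracketCochain f g ψf ψg i hi := by
  have hsign : (-1 : ℤ) ^ ((m - 1) * (n - 1)) = (-1) ^ ((m + 1) * (n + 1)) := by
    obtain ⟨m, rfl⟩ := Nat.exists_eq_add_of_le' hm
    obtain ⟨n, rfl⟩ := Nat.exists_eq_add_of_le' hn
    refine neg_one_pow_congr ?_
    simp [Nat.even_mul, Nat.even_add_one]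
  have hcomm := homotopyComp_contractionDiff_comp_comm f g h (sub_add_cancel (m : ℤ) 1).symm
    (sub_add_cancel (n : ℤ) 1).symm i (by lia)
  simp only [bracketCochain, transportLifting, DH.sub_apply, Preadditive.sub_comp, smul_sub, hcomm,
    hsign]
  abel

end HomotopyLiftings

theorem stmt11 (P : ℕ → C) (dP : ∀ i, P (i + 1) ⟶ P i)
    -- `(P, dP, μ)` is a projective resolution of `𝟙`
    (hPP : ∀ i, dP (i + 1) ≫ dP i = 0)
    (hproj : ∀ i, Projective (P i))
    (μ : P 0 ⟶ 𝟙_ C) (hμd : dP 0 ≫ μ = 0) (hepi : Epi μ)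
    (hex0 : imageSubobject (dP 0) = kernelSubobject μ)
    (hex : ∀ i, imageSubobject (dP (i + 1)) = kernelSubobject (dP i))
    -- `P` is 2-power flat: `P ⊗ P` with the augmentation `μ ⊗ μ` is again a resolution
    (hflatEpi : Epi (tAug P μ))
    (hflatd : tD P dP 0 ≫ tAug P μ = 0)
    (hflat0 : imageSubobject (tD P dP 0) = kernelSubobject (tAug P μ))
    (hflat : ∀ i, imageSubobject (tD P dP (i + 1)) = kernelSubobject (tD P dP i))
    -- `Δ` and `Δ'` are two morphisms of resolutions `P ⟶ P ⊗ P`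
    (Δ : ∀ i, P i ⟶ tOb P P i)
    (hΔd : ∀ i, Δ (i + 1) ≫ tD P dP i = dP i ≫ Δ i)
    (hΔμ : Δ 0 ≫ tAug P μ = μ)
    (Δ' : ∀ i, P i ⟶ tOb P P i)
    (hΔ'd : ∀ i, Δ' (i + 1) ≫ tD P dP i = dP i ≫ Δ' i)
    (hΔ'μ : Δ' 0 ≫ tAug P μ = μ)
    -- `f` is a degree `m` cocycle and `g` a degree `n` cocycle, `m, n ≥ 1`
    (m n : ℕ) (hm : 1 ≤ m) (hn : 1 ≤ n)
    (f : P m ⟶ 𝟙_ C) (hf : dP m ≫ f = 0)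
    (g : P n ⟶ 𝟙_ C) (hg : dP n ≫ g = 0)
    -- `ψf, ψg` are homotopy liftings with respect to `Δ`, and `ψ'f, ψ'g` w.r.t. `Δ'`
    (ψf : DH P P ((m : ℤ) - 1)) (hψf : IsHomotopyLifting P dP μ Δ m hm f ψf)
    (ψg : DH P P ((n : ℤ) - 1)) (hψg : IsHomotopyLifting P dP μ Δ n hn g ψg)
    (ψ'f : DH P P ((m : ℤ) - 1)) (hψ'f : IsHomotopyLifting P dP μ Δ' m hm f ψ'f)
    (ψ'g : DH P P ((n : ℤ) - 1)) (hψ'g : IsHomotopyLifting P dP μ Δ' n hn g ψ'g) :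
    -- then the two cochain-level brackets differ by a coboundary `v ∘ d_{m+n-2}`
    ∃ v : P (m + n - 2) ⟶ 𝟙_ C,
      (ψg (m + n - 1) m (by omega) ≫ f -
        ((-1 : ℤ) ^ ((m - 1) * (n - 1))) • (ψf (m + n - 1) n (by omega) ≫ g)) -
      (ψ'g (m + n - 1) m (by omega) ≫ f -
        ((-1 : ℤ) ^ ((m - 1) * (n - 1))) • (ψ'f (m + n - 1) n (by omega) ≫ g)) =
      eqToHom (congrArg P (show m + n - 1 = (m + n - 2) + 1 by omega)) ≫
        dP (m + n - 2) ≫ v := by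
  have hP : IsResolution dP μ := ⟨hepi, hex0, hex⟩
  obtain ⟨h, hh⟩ := exists_isHomotopy hPP ⟨hflatEpi, hflat0, hflat⟩ hΔd hΔ'd
    (hΔμ.trans hΔ'μ.symm)
  have hbracket := bracketCochain_sub_mem_coboundaries hP hf hg (hψf.transport hh hμd hf)
    (hψg.transport hh hμd hg) hψ'f hψ'g (m + n - 1) (by lia)
  rw [bracketCochain_transportLifting hm hn] at hbracket
  exact exists_eq_comp_of_mem_coboundaries hbracket (by lia)
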